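/- arXiv:math-ph/0103030 — 3 statements merged into one kernel-verified Lean document; each statement's English description precedes it below -/
import Mathlib

section
/- For every B ≠ 0, d > 0 and b ∈ (0,d), the difference ξ_B(b,z) + √(−z)/(4π) remains bounded as z → −∞; i.e. ξ_B(b,z) = −√(−z)/(4π) + O(1) as z → −∞, with the leading term independent of B. -/
open Real Filter Topology Asymptotics

/-- The digamma function `ψ = Γ'/Γ`. -/
noncomputable def digamma (x : ℝ) : ℝ := deriv Real.Gamma x / Real.Gamma x

/-- The set of Landau–transverse levels
`Σ_B = {|B|(2m+1) + (πn/d)² : m ∈ ℤ_{≥0}, n ∈ ℤ_{≥1}}` of the free magnetic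
Hamiltonian in a Dirichlet layer of width `d`. -/
def landauLevels (B d : ℝ) : Set ℝ :=
  {x | ∃ m n : ℕ, x = |B| * (2 * (m : ℝ) + 1) + (π * ((n : ℝ) + 1) / d) ^ 2}

/-- The `n`-th term (for `n+1`-st transverse mode) of the series defining the
magnetic regularized Green's function:
`t_n = ln((πn)²/(2|B|d²)) − ψ((|B| − z + (πn/d)²)/(2|B|))`. -/
noncomputable def magTerm (B d z : ℝ) (n : ℕ) : ℝ :=
  Real.log ((π * ((n : ℝ) + 1)) ^ 2 / (2 * |B| * d ^ 2)) -
    digamma ((|B| - z + (π * ((n : ℝ) + 1) / d) ^ 2) / (2 * |B|))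

/-- The magnetic regularized Green's function `ξ_B(b,z)` of a point interaction at
height `b ∈ (0,d)` in the Dirichlet layer of width `d` with homogeneous magnetic
field of strength `B`. -/
noncomputable def xiB (B d b z : ℝ) : ℝ :=
  (1 / (2 * π * d)) * ∑' n : ℕ, magTerm B d z n * Real.sin (π * ((n : ℝ) + 1) * b / d) ^ 2
    + (1 / (4 * π * d)) *
      (Real.eulerMascheroniConstant + digamma (b / d) + (π / 2) * Real.cot (π * b / d))

lemma logGamma_succ {x : ℝ} (hx : 0 < x) :
    log (Gamma (x+1)) = log x + log (Gamma x) := by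
  rw [Real.Gamma_add_one hx.ne', Real.log_mul hx.ne' (Real.Gamma_pos_of_pos hx).ne']

lemma hasDeriv_logGamma {x : ℝ} (hx : 0 < x) :
    HasDerivAt (log ∘ Gamma) (digamma x) x := by
  have hd : DifferentiableAt ℝ Gamma x := by
    apply Real.differentiableAt_Gamma
    intro m h
    have : (0:ℝ) ≤ m := Nat.cast_nonneg m
    linarith
  exact hd.hasDerivAt.log (Real.Gamma_pos_of_pos hx).ne'

lemma digamma_le {x : ℝ} (hx : 0 < x) : digamma x ≤ log x := by
  have h := Real.convexOn_log_Gamma.le_slope_of_hasDerivAt (x := x) (y := x+1)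
    (Set.mem_Ioi.2 hx) (Set.mem_Ioi.2 (by linarith)) (by linarith) (hasDeriv_logGamma hx)
  rw [slope_def_field] at h
  simp only [Function.comp, logGamma_succ hx] at h
  simpa using h

lemma digamma_succ {x : ℝ} (hx : 0 < x) : digamma (x+1) = 1 / x + digamma x := by
  have h1 : HasDerivAt (fun t => (log ∘ Gamma) (t+1)) (digamma (x+1)) x :=
    (hasDeriv_logGamma (by linarith : 0 < x + 1)).comp_add_const x 1
  have h2 : HasDerivAt (fun t => log t + (log ∘ Gamma) t) (x⁻¹ + digamma x) x :=
    (Real.hasDerivAt_log hx.ne').add (hasDeriv_logGamma hx)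
  have h3 : (fun t => (log ∘ Gamma) (t+1)) =ᶠ[𝓝 x] (fun t => log t + (log ∘ Gamma) t) := by
    filter_upwards [lt_mem_nhds hx] with t ht
    exact logGamma_succ ht
  rw [one_div]
  exact h1.unique (h2.congr_of_eventuallyEq h3)

lemma le_digamma {x : ℝ} (hx : 0 < x) : log x - 1 / x ≤ digamma x := by
  have h := Real.convexOn_log_Gamma.slope_le_of_hasDerivAt (x := x) (y := x+1)
    (Set.mem_Ioi.2 hx) (Set.mem_Ioi.2 (by linarith)) (by linarith)
    (hasDeriv_logGamma (by linarith : 0 < x + 1))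
  rw [slope_def_field] at h
  simp only [Function.comp, logGamma_succ hx] at h
  rw [digamma_succ hx] at h
  simp at h ⊢
  linarith

lemma digamma_approx {y : ℝ} (hy : 0 < y) : |log y - digamma (1/2 + y)| ≤ 1 / y := by
  have h1 := digamma_le (by linarith : 0 < 1/2 + y)
  have h2 := le_digamma (by linarith : 0 < 1/2 + y)
  have h3 : log y ≤ log (1/2+y) := Real.log_le_log hy (by linarith)
  have h4 : log (1/2+y) - log y ≤ 1 / y := by
    rw [← Real.log_div (by linarith) hy.ne']
    have := Real.log_le_sub_one_of_pos (x := (1/2+y)/y) (by positivity)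
    have e : (1/2+y)/y - 1 = (1/2) / y := by field_simp; ring
    rw [e] at this
    refine this.trans ?_
    gcongr; norm_num
  have h5 : 1 / (1/2+y) ≤ 1 / y := by gcongr; linarith
  rw [abs_le]; constructor <;> linarith

/-- f_n -/
noncomputable def fT (s : ℝ) (n : ℕ) : ℝ := log (1 + s^2 / ((n:ℝ)+1)^2)

lemma fT_nonneg (s : ℝ) (n : ℕ) : 0 ≤ fT s n :=
  Real.log_nonneg (by have : 0 ≤ s^2 / ((n:ℝ)+1)^2 := by positivity
                      linarith)

lemma fT_le (s : ℝ) (n : ℕ) : fT s n ≤ s^2 * (1 / ((n:ℝ)+1)^2) := by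
  have := Real.log_le_sub_one_of_pos (x := 1 + s^2 / ((n:ℝ)+1)^2) (by positivity)
  unfold fT
  rw [mul_one_div]; linarith

lemma summable_inv_sq : Summable (fun n : ℕ => 1 / ((n:ℝ)+1)^2) := by
  have := (summable_nat_add_iff 1).2 (Real.summable_one_div_nat_pow.2 (by norm_num : 1 < 2))
  simpa using this

lemma summable_fT (s : ℝ) : Summable (fT s) :=
  Summable.of_nonneg_of_le (fT_nonneg s) (fT_le s) (summable_inv_sq.mul_left _)

lemma fT_convex (s : ℝ) (n : ℕ) : 2 * fT s (n+1) ≤ fT s n + fT s (n+2) := by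
  unfold fT
  rw [← Real.log_mul (by positivity) (by positivity)]
  have : 2 * log (1 + s^2 / (((n+1:ℕ):ℝ)+1)^2) = log ((1 + s^2 / (((n+1:ℕ):ℝ)+1)^2)^2) := by
    rw [Real.log_pow]; norm_num
  rw [this]
  apply Real.log_le_log (by positivity)
  push_cast
  set x : ℝ := (n:ℝ) + 1 with hx
  have hx1 : 1 ≤ x := by simp [hx]
  have e1 : (n:ℝ) + 1 + 1 = x + 1 := by ring
  have e2 : (n:ℝ) + 2 + 1 = x + 2 := by rw [hx]; ring
  rw [e1, e2]
  have k1 : 2 * (1 / (x+1)^2) ≤ 1 / x^2 + 1 / (x+2)^2 := by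
    rw [div_add_div _ _ (by positivity) (by positivity), mul_one_div, div_le_div_iff₀ (by positivity) (by positivity)]
    nlinarith [sq_nonneg x, pow_pos (by linarith : 0 < x) 3, pow_pos (by linarith : 0 < x) 2]
  have k2 : (1 / (x+1)^2)^2 ≤ 1 / x^2 * (1 / (x+2)^2) := by
    rw [div_mul_div_comm, div_pow, one_pow, one_mul]
    apply one_div_le_one_div_of_le (by positivity)
    have : x^2*(x+2)^2 = (x*(x+2))^2 := by ring
    rw [this]
    apply pow_le_pow_left₀ (by positivity)
    nlinarith
  have k1' := mul_le_mul_of_nonneg_left k1 (sq_nonneg s)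
  have k2' := mul_le_mul_of_nonneg_left k2 (sq_nonneg (s^2))
  rw [div_eq_mul_one_div (s^2) ((x+1)^2), div_eq_mul_one_div (s^2) (x^2), div_eq_mul_one_div (s^2) ((x+2)^2)]
  nlinarith

lemma fT_diff (s : ℝ) : fT s 0 - fT s 1 ≤ log 4 := by
  unfold fT
  rw [← Real.log_div (by positivity) (by positivity)]
  apply Real.log_le_log (by positivity)
  rw [div_le_iff₀ (by positivity)]
  push_cast
  norm_num
  nlinarith [sq_nonneg s]

lemma fT_anti (s : ℝ) (n : ℕ) : fT s (n+1) ≤ fT s n := by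
  unfold fT
  apply Real.log_le_log (by positivity)
  push_cast
  gcongr
  linarith

/-- cos -/
noncomputable def cT (β : ℝ) (n : ℕ) : ℝ := cos (2 * π * n * β)

lemma cT_rec (β : ℝ) (n : ℕ) : 4 * sin (π*β)^2 * cT β (n+1) = 2 * cT β (n+1) - cT β n - cT β (n+2) := by
  unfold cT
  have e1 : 2 * π * (n:ℕ) * β = 2 * π * ((n+1:ℕ):ℝ) * β - 2 * (π * β) := by push_cast; ring
  have e2 : 2 * π * ((n+2:ℕ):ℝ) * β = 2 * π * ((n+1:ℕ):ℝ) * β + 2 * (π * β) := by push_cast; ring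
  rw [e1, e2, cos_sub, cos_add, cos_two_mul, sin_sq]; ring

lemma abel_bound (s β : ℝ) (N : ℕ) :
    |4 * sin (π*β)^2 * (∑ n ∈ Finset.range (N+1), fT s n * cT β (n+1)) + 2 * sin (π*β)^2 * fT s 0
      + fT s N * cT β (N+2) - fT s (N+1) * cT β (N+1)| ≤
      2 * (fT s 0 - fT s 1) - (fT s N - fT s (N+1)) := by
  induction N with
  | zero =>
    have h := cT_rec β 0
    have h0 : cT β 0 = 1 := by simp [cT]
    have h1 : cT β 1 = 1 - 2 * sin (π*β)^2 := by
      unfold cT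
      rw [show 2 * π * ((1:ℕ):ℝ) * β = 2 * (π * β) by push_cast; ring, cos_two_mul, sin_sq]; ring
    simp only [zero_add] at h ⊢
    rw [Finset.sum_range_one]
    simp only [zero_add]
    have : 4 * sin (π*β)^2 * (fT s 0 * cT β 1) + 2 * sin (π*β)^2 * fT s 0
      + fT s 0 * cT β 2 - fT s 1 * cT β 1 = (fT s 0 - fT s 1) * cT β 1 := by
      rw [h0] at h
      linear_combination fT s 0 * h + fT s 0 * h1
    rw [this, abs_mul, abs_of_nonneg (sub_nonneg.2 (fT_anti s 0))]
    have hc : |cT β 1| ≤ 1 := abs_cos_le_one _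
    have := mul_le_mul_of_nonneg_left hc (sub_nonneg.2 (fT_anti s 0))
    simp only [zero_add] at this
    linarith
  | succ N ih =>
    rw [Finset.sum_range_succ]
    have h := cT_rec β (N+1)
    have hc : |cT β (N+2)| ≤ 1 := abs_cos_le_one _
    have hv := fT_convex s N
    simp only [add_assoc, Nat.reduceAdd] at *
    set S := ∑ n ∈ Finset.range (N+1), fT s n * cT β (n+1)
    have e : 4 * sin (π*β)^2 * (S + fT s (N+1) * cT β (N+2)) + (2 * sin (π*β)^2 * fT s 0
      + fT s (N+1) * cT β (N+3)) - fT s (N+2) * cT β (N+2) =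
      (4 * sin (π*β)^2 * S + (2 * sin (π*β)^2 * fT s 0
      + fT s N * cT β (N+2)) - fT s (N+1) * cT β (N+1)) -
      (fT s N + fT s (N+2) - 2 * fT s (N+1)) * cT β (N+2) := by
      linear_combination fT s (N+1) * h
    rw [e]
    refine (abs_sub _ _).trans ?_
    rw [abs_mul, abs_of_nonneg (by linarith : 0 ≤ fT s N + fT s (N+2) - 2 * fT s (N+1))]
    have := mul_le_mul_of_nonneg_left hc (by linarith : 0 ≤ fT s N + fT s (N+2) - 2 * fT s (N+1))
    linarith

lemma summable_fc (s β : ℝ) : Summable (fun n => fT s n * cT β (n+1)) := by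
  refine Summable.of_norm_bounded (summable_fT s) fun n => ?_
  rw [norm_mul, Real.norm_of_nonneg (fT_nonneg s n)]
  exact mul_le_of_le_one_right (fT_nonneg s n) (abs_cos_le_one _)

lemma cos_bound (s β : ℝ) :
    |4 * sin (π*β)^2 * (∑' n, fT s n * cT β (n+1)) + 2 * sin (π*β)^2 * fT s 0| ≤ 2 * log 4 := by
  have ht := (summable_fc s β).hasSum.tendsto_sum_nat.comp (tendsto_add_atTop_nat 1)
  have hz (k l : ℕ) : Tendsto (fun N => fT s (N+k) * cT β (N+l)) atTop (𝓝 0) := by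
    have := (tendsto_add_atTop_iff_nat k).2 (summable_fT s).tendsto_atTop_zero
    refine squeeze_zero_norm (fun n => ?_) this
    rw [norm_mul, Real.norm_of_nonneg (fT_nonneg s _)]
    exact mul_le_of_le_one_right (fT_nonneg s _) (abs_cos_le_one _)
  have hL := (((ht.const_mul (4 * sin (π*β)^2)).add_const (2 * sin (π*β)^2 * fT s 0)).add (hz 0 2)).sub (hz 1 1)
  rw [add_zero, sub_zero] at hL
  refine le_of_tendsto hL.abs (Eventually.of_forall fun N => ?_)
  refine (abel_bound s β N).trans ?_
  have := fT_diff s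
  have := fT_anti s N
  linarith

lemma tsum_fT {s : ℝ} (hs : 0 < s) : ∑' n, fT s n = log (sinh (π * s)) - log (π * s) := by
  have h := Complex.tendsto_euler_sin_prod (s * Complex.I)
  have h2 : Tendsto (fun n : ℕ => π * s * ∏ j ∈ Finset.range n, (1 + s^2 / ((j:ℝ)+1)^2)) atTop
      (𝓝 (sinh (π * s))) := by
    have h3 := h.mul_const (-Complex.I)
    have h4 := (Complex.continuous_re.tendsto _).comp h3
    convert h4 using 1
    · ext n
      simp only [Function.comp]
      have : (π:ℂ) * (s * Complex.I) * (∏ j ∈ Finset.range n, (1 - (s * Complex.I)^2 / ((j:ℂ)+1)^2)) * (-Complex.I)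
        = ((π * s * ∏ j ∈ Finset.range n, (1 + s^2 / ((j:ℝ)+1)^2) : ℝ) : ℂ) := by
        push_cast
        simp only [mul_pow, Complex.I_sq, mul_neg, mul_one, neg_div, sub_neg_eq_add]
        linear_combination -((π:ℂ) * s * ∏ j ∈ Finset.range n, (1 + (s:ℂ)^2 / ((j:ℂ)+1)^2)) * Complex.I_sq
      rw [this, Complex.ofReal_re]
    · have : Complex.sin (π * (s * Complex.I)) * (-Complex.I) = ((sinh (π * s) : ℝ) : ℂ) := by
        rw [← mul_assoc, Complex.sin_mul_I]
        push_cast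
        linear_combination -Complex.sinh (π * s) * Complex.I_sq
      rw [this, Complex.ofReal_re]
  have hps : 0 < π * s := by positivity
  have h5 := h2.log (Real.sinh_pos_iff.2 hps).ne'
  have h6 := h5.sub_const (log (π * s))
  refine tendsto_nhds_unique (summable_fT s).hasSum.tendsto_sum_nat (h6.congr fun n => ?_)
  rw [Real.log_mul hps.ne' (Finset.prod_pos fun _ _ => by positivity).ne', Real.log_prod (fun _ _ => by positivity)]
  simp [fT]

lemma sin_sum {s β : ℝ} (hs : 1 ≤ s) (hβ : sin (π*β) ≠ 0) :
    |∑' n, fT s n * sin (π * ((n:ℝ)+1) * β)^2 - π * s / 2| ≤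
      (log 4 + log π + log 2 + log 4 / (2 * sin (π*β)^2)) / 2 := by
  have e : ∑' n, fT s n * sin (π * ((n:ℝ)+1) * β)^2 =
      (1/2) * (∑' n, fT s n - ∑' n, fT s n * cT β (n+1)) := by
    rw [← (summable_fT s).tsum_sub (summable_fc s β), ← tsum_mul_left]
    congr 1; ext n
    unfold cT
    rw [show 2 * π * ((n+1:ℕ):ℝ) * β = 2 * (π * ((n:ℝ)+1) * β) by push_cast; ring, cos_two_mul, sin_sq]
    ring
  have hs0 : 0 < s := by linarith
  rw [e, tsum_fT hs0]
  have hσ : 0 < sin (π*β)^2 := by positivity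
  have hc := cos_bound s β
  set T := ∑' n, fT s n * cT β (n+1)
  have hT : |T + fT s 0 / 2| ≤ log 4 / (2 * sin (π*β)^2) := by
    rw [le_div_iff₀ (by positivity)]
    have : 4 * sin (π*β)^2 * T + 2 * sin (π*β)^2 * fT s 0 = (4 * sin (π*β)^2) * (T + fT s 0 / 2) := by ring
    rw [this, abs_mul, abs_of_pos (by positivity)] at hc
    linarith
  have hf1 : 2 * log s ≤ fT s 0 := by
    have : 2 * log s = log (s^2) := by rw [Real.log_pow]; norm_num
    rw [this]; unfold fT
    apply Real.log_le_log (by positivity)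
    simp
  have hf2 : fT s 0 ≤ log 2 + 2 * log s := by
    have : 2 * log s = log (s^2) := by rw [Real.log_pow]; norm_num
    rw [this, ← Real.log_mul (by norm_num) (by positivity)]; unfold fT
    apply Real.log_le_log (by positivity)
    simp; nlinarith
  have hps : 1 ≤ π * s := by nlinarith [Real.pi_gt_three]
  have hx : exp (-(π*s)) ≤ exp (π*s) / 2 := by
    have h1 := Real.add_one_le_exp (π*s)
    have h2 : exp (-(π*s)) ≤ 1 := Real.exp_le_one_iff.2 (by linarith)
    linarith
  have hsh1 : log (sinh (π*s)) ≤ π * s := by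
    rw [Real.log_le_iff_le_exp (Real.sinh_pos_iff.2 (by linarith)), Real.sinh_eq]
    have := Real.exp_pos (-(π*s)); have := Real.exp_pos ((π*s)); linarith
  have hsh2 : π * s - log 4 ≤ log (sinh (π*s)) := by
    rw [Real.le_log_iff_exp_le (Real.sinh_pos_iff.2 (by linarith)), Real.sinh_eq, Real.exp_sub,
      Real.exp_log (by norm_num)]
    linarith
  have hl4 : 0 ≤ log 4 := Real.log_nonneg (by norm_num)
  have hl2 : 0 ≤ log 2 := Real.log_nonneg (by norm_num)
  have hlp : 0 ≤ log π := Real.log_nonneg (by linarith [Real.pi_gt_three])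
  rw [Real.log_mul Real.pi_pos.ne' hs0.ne']
  rw [abs_le] at hT ⊢
  constructor <;> linarith [hT.1, hT.2]

lemma magTerm_eq {B d w : ℝ} (hB : B ≠ 0) (hd : 0 < d) (hw : 0 ≤ w) (n : ℕ) :
    |magTerm B d (-w) n + fT (sqrt w * d / π) n| ≤ 2 * |B| * d^2 / π^2 * (1 / ((n:ℝ)+1)^2) := by
  have hB' : 0 < |B| := abs_pos.2 hB
  have hpi := Real.pi_pos
  set a : ℝ := π * ((n:ℝ)+1) / d with ha
  have ha0 : 0 < a := by positivity
  have hy : 0 < (w + a^2) / (2 * |B|) := by positivity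
  have h := digamma_approx hy
  have e1 : (|B| - -w + a^2) / (2*|B|) = 1/2 + (w + a^2) / (2 * |B|) := by field_simp; ring
  have e2 : log ((π * ((n:ℝ)+1))^2 / (2 * |B| * d^2)) + fT (sqrt w * d / π) n
      = log ((w + a^2) / (2 * |B|)) := by
    unfold fT
    rw [← Real.log_mul (by positivity) (by positivity)]
    congr 1
    rw [div_pow, mul_pow (sqrt w) d, Real.sq_sqrt hw, ha]
    field_simp
    ring
  have e3 : magTerm B d (-w) n + fT (sqrt w * d / π) n =
      log ((w + a^2) / (2 * |B|)) - digamma (1/2 + (w + a^2) / (2 * |B|)) := by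
    rw [← e2, ← e1]; unfold magTerm; ring
  rw [e3]
  refine h.trans ?_
  have e4 : 2 * |B| * d^2 / π^2 * (1 / ((n:ℝ)+1)^2) = 1 / (a^2 / (2*|B|)) := by
    rw [ha]; field_simp
  rw [e4]
  gcongr
  linarith

/-- For `B ≠ 0`, `d > 0`, `b ∈ (0,d)`, the difference `ξ_B(b,z) + √(−z)/(4π)`
remains bounded as `z → −∞`, i.e. `ξ_B(b,z) = −√(−z)/(4π) + O(1)`, the leading
term being independent of `B`. -/
theorem xiB_large_negative_asymptotics (B d b : ℝ) (hB : B ≠ 0) (hd : 0 < d)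
    (hb0 : 0 < b) (hbd : b < d) :
    ∃ C z₁ : ℝ, ∀ z : ℝ, z ≤ z₁ →
      |xiB B d b z + Real.sqrt (-z) / (4 * π)| ≤ C := by
  have hpi := Real.pi_pos
  have hβ : sin (π * (b / d)) ≠ 0 := by
    apply (Real.sin_pos_of_pos_of_lt_pi (by positivity) _).ne'
    have : b / d < 1 := (div_lt_one hd).2 hbd
    nlinarith
  set K := Real.eulerMascheroniConstant + digamma (b / d) + (π / 2) * Real.cot (π * b / d) with hK
  set C1 := (log 4 + log π + log 2 + log 4 / (2 * sin (π * (b / d))^2)) / 2 with hC1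
  set C2 := ∑' n : ℕ, 2 * |B| * d^2 / π^2 * (1 / ((n:ℝ)+1)^2) with hC2
  refine ⟨1 / (2 * π * d) * (C1 + C2) + |1 / (4 * π * d) * K|, -(π / d)^2, fun z hz => ?_⟩
  obtain ⟨w, rfl⟩ : ∃ w, z = -w := ⟨-z, by ring⟩
  have hw1 : (π / d)^2 ≤ w := by linarith
  have hw : 0 ≤ w := (sq_nonneg _).trans hw1
  rw [neg_neg]
  set s := sqrt w * d / π with hs
  have hs1 : 1 ≤ s := by
    have h1 : π / d ≤ sqrt w := Real.le_sqrt_of_sq_le hw1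
    rw [hs, le_div_iff₀ hpi, one_mul]
    exact (div_le_iff₀ hd).1 h1
  have hmain := sin_sum hs1 hβ
  rw [← hC1] at hmain
  have hsb := summable_inv_sq.mul_left (2 * |B| * d^2 / π^2)
  have hbd2 : ∀ n : ℕ, ‖(magTerm B d (-w) n + fT s n) * sin (π * ((n:ℝ)+1) * (b / d))^2‖ ≤
      2 * |B| * d^2 / π^2 * (1 / ((n:ℝ)+1)^2) := by
    intro n
    rw [norm_mul, Real.norm_eq_abs, Real.norm_of_nonneg (sq_nonneg _)]
    have h1 := magTerm_eq hB hd hw n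
    exact (mul_le_of_le_one_right (abs_nonneg _) (Real.sin_sq_le_one _)).trans h1
  have hsum1 : Summable fun n : ℕ => (magTerm B d (-w) n + fT s n) * sin (π * ((n:ℝ)+1) * (b / d))^2 :=
    Summable.of_norm_bounded hsb hbd2
  have hE := tsum_of_norm_bounded hsb.hasSum hbd2
  rw [← hC2, Real.norm_eq_abs] at hE
  have hsum2 : Summable fun n : ℕ => fT s n * sin (π * ((n:ℝ)+1) * (b / d))^2 := by
    refine Summable.of_nonneg_of_le (fun n => mul_nonneg (fT_nonneg s n) (sq_nonneg _)) (fun n => ?_)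
      (summable_fT s)
    exact mul_le_of_le_one_right (fT_nonneg s n) (Real.sin_sq_le_one _)
  have hsplit : ∑' n : ℕ, magTerm B d (-w) n * Real.sin (π * ((n : ℝ) + 1) * b / d) ^ 2 =
      (∑' n : ℕ, (magTerm B d (-w) n + fT s n) * sin (π * ((n:ℝ)+1) * (b / d))^2) -
      ∑' n : ℕ, fT s n * sin (π * ((n:ℝ)+1) * (b / d))^2 := by
    rw [← hsum1.tsum_sub hsum2]
    congr 1; ext n
    rw [mul_div_assoc]; ring
  unfold xiB
  rw [hsplit, ← hK]
  set E := ∑' n : ℕ, (magTerm B d (-w) n + fT s n) * sin (π * ((n:ℝ)+1) * (b / d))^2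
  set F := ∑' n : ℕ, fT s n * sin (π * ((n:ℝ)+1) * (b / d))^2
  have hsw : sqrt w / (4 * π) = 1 / (2 * π * d) * (π * s / 2) := by
    rw [hs]; field_simp; ring
  have e : 1 / (2 * π * d) * (E - F) + 1 / (4 * π * d) * K + sqrt w / (4 * π) =
      1 / (2 * π * d) * (E - (F - π * s / 2)) + 1 / (4 * π * d) * K := by
    rw [hsw]; ring
  rw [e]
  refine (abs_add_le _ _).trans ?_
  gcongr
  rw [abs_mul, abs_of_pos (by positivity : 0 < 1 / (2 * π * d))]
  gcongr
  refine (abs_sub _ _).trans ?_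
  linarith
end

section
/- Unique eigenvalue in each magnetic gap: let B ≠ 0, d > 0, b ∈ (0,d), and let z₀ < z₁ be two consecutive elements of Σ_B (i.e. (z₀,z₁) ∩ Σ_B = ∅). Assume Σ_{n ∈ J(z₀)} sin²(πnb/d) > 0 and Σ_{n ∈ J(z₁)} sin²(πnb/d) > 0, where J(z_i) := {n ∈ ℤ_{≥1} : ∃ m ∈ ℤ_{≥0}, |B|(2m+1) + (πn/d)² = z_i}. Then for every α ∈ ℝ there exists a unique z = ε(α) ∈ (z₀,z₁) with ξ_B(b,z) = α, and α ↦ ε(α) is strictly increasing. -/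
open Real Filter Topology Asymptotics

theorem dg_add_one {x : ℝ} (hx : ∀ m : ℕ, x ≠ -m) : digamma (x + 1) = digamma x + 1 / x := by
  have hx0 : x ≠ 0 := by simpa using hx 0
  have hG : Gamma x ≠ 0 := Real.Gamma_ne_zero hx
  have hx1 : ∀ m : ℕ, x + 1 ≠ -m := by
    intro m h
    apply hx (m + 1)
    push_cast
    linarith
  have h1 : HasDerivAt (fun y : ℝ => Gamma (y + 1)) (deriv Gamma (x + 1)) x := by
    have := (Real.differentiableAt_Gamma hx1).hasDerivAt
    exact this.comp_add_const x 1
  have h2 : HasDerivAt (fun y : ℝ => y * Gamma y) (1 * Gamma x + x * deriv Gamma x) x :=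
    (hasDerivAt_id x).mul (Real.differentiableAt_Gamma hx).hasDerivAt
  have h3 : (fun y : ℝ => Gamma (y + 1)) =ᶠ[𝓝 x] fun y => y * Gamma y := by
    filter_upwards [isOpen_ne.mem_nhds hx0] with y hy
    exact Real.Gamma_add_one hy
  have h4 := (h2.congr_of_eventuallyEq h3).unique h1
  unfold digamma
  rw [← h4, Real.Gamma_add_one hx0]
  field_simp
  ring

theorem pos_ne {x : ℝ} (hx : 0 < x) (m : ℕ) : x ≠ -m := by
  have : (0 : ℝ) ≤ m := m.cast_nonneg
  intro h
  linarith

theorem dg_hasDerivAt {x : ℝ} (hx : 0 < x) :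
    HasDerivAt (Real.log ∘ Gamma) (digamma x) x := by
  have := (Real.differentiableAt_Gamma (pos_ne hx)).hasDerivAt.log (Real.Gamma_ne_zero (pos_ne hx))
  exact this

theorem dg_mono {x y : ℝ} (hx : 0 < x) (hxy : x ≤ y) : digamma x ≤ digamma y := by
  rcases hxy.eq_or_lt with rfl | h
  · exact le_rfl
  · have hy := hx.trans h
    exact (Real.convexOn_log_Gamma.le_slope_of_hasDerivAt hx hy h (dg_hasDerivAt hx)).trans
      (Real.convexOn_log_Gamma.slope_le_of_hasDerivAt hx hy h (dg_hasDerivAt hy))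

theorem dg_slope {x : ℝ} (hx : 0 < x) : slope (Real.log ∘ Gamma) x (x + 1) = Real.log x := by
  rw [slope_def_field]
  simp only [Function.comp]
  rw [Real.Gamma_add_one hx.ne', Real.log_mul hx.ne' (Real.Gamma_pos_of_pos hx).ne']
  ring

theorem dg_le_log {x : ℝ} (hx : 0 < x) : digamma x ≤ Real.log x := by
  rw [← dg_slope hx]
  exact Real.convexOn_log_Gamma.le_slope_of_hasDerivAt hx (Set.mem_Ioi.2 (by linarith))
    (by linarith) (dg_hasDerivAt hx)

theorem log_le_dg {x : ℝ} (hx : 0 < x) : Real.log x - 1 / x ≤ digamma x := by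
  have h := Real.convexOn_log_Gamma.slope_le_of_hasDerivAt hx
    (Set.mem_Ioi.2 (by linarith : 0 < x + 1))
    (by linarith) (dg_hasDerivAt (by linarith : 0 < x + 1))
  rw [dg_slope hx, dg_add_one (pos_ne hx)] at h
  linarith

theorem dg_strict_aux (N : ℕ) : ∀ x y : ℝ, 0 < x + N → x < y →
    (∀ m : ℕ, ¬ (x ≤ -m ∧ -(m : ℝ) ≤ y)) → digamma x < digamma y := by
  have step : ∀ x y : ℝ, x < y → (∀ m : ℕ, ¬ (x ≤ -m ∧ -(m : ℝ) ≤ y)) →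
      digamma (x + 1) ≤ digamma (y + 1) → digamma x < digamma y := by
    intro x y hxy h hle
    rw [dg_add_one (fun m hm => h m ⟨hm.le, by linarith⟩),
      dg_add_one (fun m hm => h m ⟨by linarith, hm.ge⟩)] at hle
    have h0 : ¬ (x ≤ 0 ∧ 0 ≤ y) := by simpa using h 0
    have : 1 / y < 1 / x := by
      rcases lt_or_ge 0 x with hx | hx
      · exact one_div_lt_one_div_of_lt hx hxy
      · have hy : y < 0 := by
          by_contra hc
          exact h0 ⟨hx, not_lt.1 hc⟩
        exact one_div_lt_one_div_of_neg_of_lt hy hxy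
    linarith
  induction N with
  | zero =>
    intro x y hx hxy h
    simp only [Nat.cast_zero, add_zero] at hx
    exact step x y hxy h (dg_mono (by linarith) (by linarith))
  | succ N ih =>
    intro x y hx hxy h
    push_cast at hx
    refine step x y hxy h (ih (x + 1) (y + 1) (by linarith) (by linarith) ?_).le
    rintro m ⟨h1, h2⟩
    refine h (m + 1) ⟨?_, ?_⟩ <;> push_cast <;> linarith

theorem dg_strict {x y : ℝ} (hxy : x < y)
    (h : ∀ m : ℕ, ¬ (x ≤ -m ∧ -(m : ℝ) ≤ y)) : digamma x < digamma y := by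
  obtain ⟨N, hN⟩ := exists_nat_gt (-x)
  exact dg_strict_aux N x y (by linarith) hxy h

theorem cplx_ne {x : ℝ} (hx : ∀ m : ℕ, x ≠ -m) (m : ℕ) : (x : ℂ) ≠ -m := by
  intro h
  apply hx m
  exact_mod_cast h

theorem near_ne {x : ℝ} (hx : ∀ m : ℕ, x ≠ -m) : ∀ᶠ y : ℂ in 𝓝 (x : ℂ), ∀ m : ℕ, y ≠ -m := by
  have hne : Complex.Gamma (x : ℂ) ≠ 0 := Complex.Gamma_ne_zero (cplx_ne hx)
  have hc := (Complex.differentiableAt_Gamma _ (cplx_ne hx)).continuousAt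
  filter_upwards [hc.eventually_ne hne] with y hy m hm
  exact hy (by rw [hm, Complex.Gamma_neg_nat_eq_zero])

theorem dg_cont {x : ℝ} (hx : ∀ m : ℕ, x ≠ -m) : ContinuousAt digamma x := by
  have hev := near_ne hx
  have han : AnalyticAt ℂ Complex.Gamma (x : ℂ) := by
    rw [Complex.analyticAt_iff_eventually_differentiableAt]
    filter_upwards [hev] with y hy
    exact Complex.differentiableAt_Gamma y hy
  have hcd : ContinuousAt (fun y : ℝ => (deriv Complex.Gamma (y : ℂ)).re) x := by
    have h1 : ContinuousAt (deriv Complex.Gamma) ((x : ℝ) : ℂ) := han.deriv.continuousAt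
    exact Complex.continuous_re.continuousAt.comp
      (ContinuousAt.comp (f := fun y : ℝ => (y : ℂ)) h1 Complex.continuous_ofReal.continuousAt)
  have hG : ContinuousAt Real.Gamma x := (Real.differentiableAt_Gamma hx).continuousAt
  refine (hcd.div hG (Real.Gamma_ne_zero hx)).congr ?_
  have hev' : ∀ᶠ y : ℝ in 𝓝 x, ∀ m : ℕ, (y : ℂ) ≠ -m :=
    Complex.continuous_ofReal.continuousAt.eventually hev
  filter_upwards [hev'] with y hy
  unfold digamma
  have := (Complex.differentiableAt_Gamma (y : ℂ) hy).hasDerivAt.real_of_complex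
  have h2 : (fun x : ℝ => (Complex.Gamma x).re) = Real.Gamma := by
    ext t
    simp [Complex.Gamma_ofReal]
  rw [h2] at this
  simp only [Pi.div_apply]
  rw [this.deriv]

theorem near_ne' (m : ℕ) : ∀ᶠ y : ℝ in 𝓝[≠] (-(m : ℝ)), ∀ k : ℕ, y ≠ -k := by
  have h1 : ∀ᶠ y : ℝ in 𝓝[≠] (-(m : ℝ)), y ∈ Metric.ball (-(m : ℝ)) 1 :=
    nhdsWithin_le_nhds (Metric.ball_mem_nhds _ one_pos)
  filter_upwards [h1, self_mem_nhdsWithin] with y hy hy' k hk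
  rw [Metric.mem_ball, Real.dist_eq, hk, abs_lt] at hy
  apply hy'
  have a1 : (k : ℝ) < m + 1 := by linarith
  have a2 : (m : ℝ) < k + 1 := by linarith
  have a1' : k < m + 1 := by exact_mod_cast a1
  have a2' : m < k + 1 := by exact_mod_cast a2
  have : k = m := by omega
  simp [hk, this]

theorem dg_pole (m : ℕ) : Tendsto digamma (𝓝[>] (-(m : ℝ))) atBot ∧
    Tendsto digamma (𝓝[<] (-(m : ℝ))) atTop := by
  induction m with
  | zero =>
    have hev := near_ne' 0
    simp only [Nat.cast_zero, neg_zero] at hev ⊢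
    have hc : Tendsto (fun x : ℝ => digamma (x + 1)) (𝓝 0) (𝓝 (digamma (0 + 1))) := by
      have h1 : ContinuousAt digamma ((0 : ℝ) + 1) := dg_cont (pos_ne (by norm_num))
      exact (ContinuousAt.comp (f := fun y : ℝ => y + 1) h1 (by fun_prop))
    constructor
    · have h2 := (hc.mono_left (nhdsWithin_le_nhds (s := Set.Ioi 0))).add_atBot
        (tendsto_neg_atTop_atBot.comp tendsto_inv_nhdsGT_zero)
      refine h2.congr' ?_
      have := hev.filter_mono (nhdsWithin_mono _ (fun y (hy : (0 : ℝ) < y) => hy.ne'))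
      filter_upwards [this] with y hy
      simp [dg_add_one hy]
    · have h2 := (hc.mono_left (nhdsWithin_le_nhds (s := Set.Iio 0))).add_atTop
        (tendsto_neg_atBot_atTop.comp tendsto_inv_nhdsLT_zero)
      refine h2.congr' ?_
      have := hev.filter_mono (nhdsWithin_mono _ (fun y (hy : y < (0 : ℝ)) => hy.ne))
      filter_upwards [this] with y hy
      simp [dg_add_one hy]
  | succ m ih =>
    have hev := near_ne' (m + 1)
    set p : ℝ := -((m + 1 : ℕ) : ℝ) with hp
    have hp1 : p + 1 = -(m : ℝ) := by rw [hp]; push_cast; ring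
    have hp0 : p ≠ 0 := by
      rw [hp]
      exact neg_ne_zero.2 (Nat.cast_ne_zero.2 (Nat.succ_ne_zero m))
    have hinv : Tendsto (fun x : ℝ => -x⁻¹) (𝓝 p) (𝓝 (-p⁻¹)) := (tendsto_inv₀ hp0).neg
    have hc : Tendsto (fun x : ℝ => x + 1) (𝓝 p) (𝓝 (-(m : ℝ))) := by
      rw [← hp1]
      exact (continuous_id.add continuous_const).tendsto p
    constructor
    · have hs : Tendsto (fun x : ℝ => x + 1) (𝓝[>] p) (𝓝[>] (-(m : ℝ))) := by
        refine tendsto_nhdsWithin_iff.2 ⟨hc.mono_left nhdsWithin_le_nhds, ?_⟩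
        filter_upwards [self_mem_nhdsWithin] with y hy
        rw [Set.mem_Ioi] at *
        linarith
      refine ((hinv.mono_left nhdsWithin_le_nhds).add_atBot (ih.1.comp hs)).congr' ?_
      have := hev.filter_mono (nhdsWithin_mono _ (fun y (hy : p < y) => hy.ne'))
      filter_upwards [this] with y hy
      simp [dg_add_one hy]
    · have hs : Tendsto (fun x : ℝ => x + 1) (𝓝[<] p) (𝓝[<] (-(m : ℝ))) := by
        refine tendsto_nhdsWithin_iff.2 ⟨hc.mono_left nhdsWithin_le_nhds, ?_⟩
        filter_upwards [self_mem_nhdsWithin] with y hy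
        rw [Set.mem_Iio] at *
        linarith
      refine ((hinv.mono_left nhdsWithin_le_nhds).add_atTop (ih.2.comp hs)).congr' ?_
      have := hev.filter_mono (nhdsWithin_mono _ (fun y (hy : y < p) => hy.ne))
      filter_upwards [this] with y hy
      simp [dg_add_one hy]

theorem log_sub_dg_bound {A c : ℝ} (hA : 0 < A) (h : 2 * |c| ≤ A) :
    |Real.log A - digamma (A + c)| ≤ (2 * |c| + 2) / A := by
  have hc := abs_le.1 (le_refl |c|)
  have hpos : A / 2 ≤ A + c := by linarith
  have hX : 0 < A + c := by linarith
  have h1 := dg_le_log hX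
  have h2 := log_le_dg hX
  have h3 : Real.log (A + c) - Real.log A ≤ |c| / A := by
    rw [← Real.log_div hX.ne' hA.ne']
    refine (Real.log_le_sub_one_of_pos (by positivity)).trans ?_
    rw [div_sub_one hA.ne']
    gcongr
    linarith
  have hinv : 1 / (A + c) ≤ 2 / A := by
    rw [div_le_div_iff₀ hX hA]
    linarith
  have h4 : Real.log A - Real.log (A + c) ≤ |c| * (2 / A) := by
    rw [← Real.log_div hA.ne' hX.ne']
    refine (Real.log_le_sub_one_of_pos (by positivity)).trans ?_
    rw [div_sub_one hX.ne']
    calc (A - (A + c)) / (A + c) ≤ |c| / (A + c) := by gcongr; linarith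
      _ = |c| * (1 / (A + c)) := by ring
      _ ≤ _ := by gcongr
  have e1 : (2 * |c| + 2) / A = |c| * (2 / A) + 2 / A := by ring
  have e2 : |c| * (2 / A) = |c| / A + |c| / A := by ring
  have e3 : 0 ≤ |c| / A := by positivity
  have e4 : 0 ≤ 2 / A := by positivity
  rw [abs_le]
  constructor <;> linarith

theorem magTerm_summable {B d : ℝ} (hB : B ≠ 0) (hd : 0 < d) (b z : ℝ) :
    Summable fun n : ℕ => magTerm B d z n * Real.sin (π * ((n : ℝ) + 1) * b / d) ^ 2 := by
  have hB' : 0 < |B| := abs_pos.2 hB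
  set K : ℝ := π ^ 2 / (2 * |B| * d ^ 2) with hK
  have hKpos : 0 < K := by positivity
  set c : ℝ := (|B| - z) / (2 * |B|) with hc
  have hsum : Summable fun n : ℕ => (2 * |c| + 2) / K * (1 / ((n : ℝ) + 1) ^ 2) := by
    apply Summable.mul_left
    have := (summable_nat_add_iff 1).2 (Real.summable_one_div_nat_pow.2 (by norm_num : 1 < 2))
    simpa using this
  refine Summable.of_norm_bounded_eventually_nat hsum ?_
  obtain ⟨N, hN⟩ := exists_nat_gt (2 * |c| / K)
  filter_upwards [eventually_ge_atTop N] with n hn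
  have hn' : (N : ℝ) ≤ n := by exact_mod_cast hn
  have hA : 2 * |c| ≤ K * ((n : ℝ) + 1) ^ 2 := by
    rw [div_lt_iff₀ hKpos] at hN
    have h0 : (0 : ℝ) ≤ n := n.cast_nonneg
    nlinarith [mul_nonneg hKpos.le (by nlinarith : (0 : ℝ) ≤ (n + 1) ^ 2 - N)]
  have hb := log_sub_dg_bound (by positivity) hA
  have e1 : (π * ((n : ℝ) + 1)) ^ 2 / (2 * |B| * d ^ 2) = K * ((n : ℝ) + 1) ^ 2 := by
    rw [hK]; ring
  have e2 : (|B| - z + (π * ((n : ℝ) + 1) / d) ^ 2) / (2 * |B|) = K * ((n : ℝ) + 1) ^ 2 + c := by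
    rw [hK, hc]; field_simp; ring
  unfold magTerm
  rw [e1, e2, norm_mul, Real.norm_eq_abs, Real.norm_eq_abs]
  have hs : |Real.sin (π * ((n : ℝ) + 1) * b / d) ^ 2| ≤ 1 := by
    rw [abs_of_nonneg (sq_nonneg _)]
    exact Real.sin_sq_le_one _
  calc _ ≤ (2 * |c| + 2) / (K * ((n : ℝ) + 1) ^ 2) * 1 := by gcongr
    _ = _ := by field_simp

theorem series_gap (f : ℕ → ℝ → ℝ) {p q : ℝ} (hpq : p < q)
    (hs : ∀ z, Summable fun n => f n z)
    (hc : ∀ n, ContinuousOn (f n) (Set.Ioo p q))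
    (hm : ∀ n, MonotoneOn (f n) (Set.Ioo p q))
    (hst : ∃ i, StrictMonoOn (f i) (Set.Ioo p q))
    (hbot : ∃ i, Tendsto (f i) (𝓝[>] p) atBot)
    (htop : ∃ i, Tendsto (f i) (𝓝[<] q) atTop) :
    StrictMonoOn (fun z => ∑' n, f n z) (Set.Ioo p q) ∧
    ∀ α, ∃ z ∈ Set.Ioo p q, ∑' n, f n z = α := by
  have key : ∀ i, ∀ z ∈ Set.Ioo p q, ∀ w ∈ Set.Ioo p q, z ≤ w →
      f i w - f i z ≤ ∑' n, f n w - ∑' n, f n z := by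
    intro i z hz w hw hzw
    rw [← (hs w).tsum_sub (hs z)]
    exact ((hs w).sub (hs z)).le_tsum i (fun j _ => sub_nonneg.2 (hm j hz hw hzw))
  refine ⟨?_, ?_⟩
  · obtain ⟨i, hi⟩ := hst
    intro z hz w hw hzw
    have := key i z hz w hw hzw.le
    have := hi hz hw hzw
    simp only
    linarith
  · intro α
    obtain ⟨c, hc1, hc2⟩ := exists_between hpq
    have hcm : c ∈ Set.Ioo p q := ⟨hc1, hc2⟩
    obtain ⟨u, hu, hu', huc⟩ : ∃ u ∈ Set.Ioo p q, ∑' n, f n u ≤ α ∧ u ≤ c := by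
      obtain ⟨i, hi⟩ := hbot
      have h1 := hi.eventually (eventually_le_atBot (α - ∑' n, f n c + f i c))
      obtain ⟨u, h1, h2⟩ := (h1.and (Ioo_mem_nhdsGT hc1)).exists
      have hum : u ∈ Set.Ioo p q := ⟨h2.1, h2.2.trans hc2⟩
      have := key i u hum c hcm h2.2.le
      exact ⟨u, hum, by linarith, h2.2.le⟩
    obtain ⟨v, hv, hv', hvc⟩ : ∃ v ∈ Set.Ioo p q, α ≤ ∑' n, f n v ∧ c ≤ v := by
      obtain ⟨i, hi⟩ := htop
      have h1 := hi.eventually (eventually_ge_atTop (α - ∑' n, f n c + f i c))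
      obtain ⟨v, h1, h2⟩ := (h1.and (Ioo_mem_nhdsLT hc2)).exists
      have hvm : v ∈ Set.Ioo p q := ⟨hc1.trans h2.1, h2.2⟩
      have := key i c hcm v hvm h2.1.le
      exact ⟨v, hvm, by linarith, h2.1.le⟩
    have hsub : Set.Icc u v ⊆ Set.Ioo p q := fun x hx =>
      ⟨hu.1.trans_le hx.1, hx.2.trans_lt hv.2⟩
    have hcont : ContinuousOn (fun z => ∑' n, f n z) (Set.Icc u v) := by
      refine continuousOn_tsum (u := fun n => |f n u| + |f n v|) (fun n => (hc n).mono hsub)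
        ((hs u).abs.add (hs v).abs) ?_
      intro n x hx
      have h1 := hm n hu (hsub hx) hx.1
      have h2 := hm n (hsub hx) hv hx.2
      rw [Real.norm_eq_abs, abs_le]
      have := neg_abs_le (f n u)
      have := le_abs_self (f n v)
      have := abs_nonneg (f n u)
      have := abs_nonneg (f n v)
      constructor <;> linarith
    obtain ⟨z, hz, hz'⟩ := intermediate_value_Icc (huc.trans hvc) hcont ⟨hu', hv'⟩
    exact ⟨z, hsub hz, hz'⟩

theorem exists_ne_of_tsum_pos {ι : Type*} {g : ι → ℝ} (h : 0 < ∑' i, g i) : ∃ i, g i ≠ 0 := by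
  by_contra hc
  push Not at hc
  simp [hc] at h

theorem xiB_unique_eigenvalue_in_gap (B d b z₀ z₁ : ℝ) (hB : B ≠ 0) (hd : 0 < d)
    (hb0 : 0 < b) (hbd : b < d)
    (hz₀ : z₀ ∈ landauLevels B d) (hz₁ : z₁ ∈ landauLevels B d) (hlt : z₀ < z₁)
    (hgap : Set.Ioo z₀ z₁ ∩ landauLevels B d = ∅)
    (hs₀ : 0 < ∑' n : {n : ℕ // ∃ m : ℕ,
        |B| * (2 * (m : ℝ) + 1) + (π * (((n : ℕ) : ℝ) + 1) / d) ^ 2 = z₀},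
      Real.sin (π * (((n : ℕ) : ℝ) + 1) * b / d) ^ 2)
    (hs₁ : 0 < ∑' n : {n : ℕ // ∃ m : ℕ,
        |B| * (2 * (m : ℝ) + 1) + (π * (((n : ℕ) : ℝ) + 1) / d) ^ 2 = z₁},
      Real.sin (π * (((n : ℕ) : ℝ) + 1) * b / d) ^ 2) :
    (∀ α : ℝ, ∃! z : ℝ, z ∈ Set.Ioo z₀ z₁ ∧ xiB B d b z = α) ∧
    (∀ α α' z z' : ℝ, z ∈ Set.Ioo z₀ z₁ → z' ∈ Set.Ioo z₀ z₁ →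
      xiB B d b z = α → xiB B d b z' = α' → α < α' → z < z') := by
  have hB' : 0 < |B| := abs_pos.2 hB
  let f : ℕ → ℝ → ℝ := fun n z =>
    magTerm B d z n * Real.sin (π * ((n : ℝ) + 1) * b / d) ^ 2
  let a : ℕ → ℝ → ℝ := fun n z => (|B| - z + (π * ((n : ℝ) + 1) / d) ^ 2) / (2 * |B|)
  have hlev : ∀ n m : ℕ, a n (|B| * (2 * (m : ℝ) + 1) + (π * ((n : ℝ) + 1) / d) ^ 2) = -m := by
    intro n m
    simp only [a]
    rw [div_eq_iff (by positivity)]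
    ring
  have hanti : ∀ n, StrictAnti (a n) := by
    intro n z w hzw
    simp only [a]
    gcongr
  have hacont : ∀ n, Continuous (a n) := by
    intro n
    simp only [a]
    fun_prop
  have hno : ∀ n, ∀ z ∈ Set.Ioo z₀ z₁, ∀ w ∈ Set.Ioo z₀ z₁, ∀ m : ℕ,
      ¬ (a n w ≤ -m ∧ -(m : ℝ) ≤ a n z) := by
    rintro n z hz w hw m ⟨h1, h2⟩
    rw [← hlev n m] at h1 h2
    rw [(hanti n).le_iff_ge] at h1 h2
    have : |B| * (2 * (m : ℝ) + 1) + (π * ((n : ℝ) + 1) / d) ^ 2 ∈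
        Set.Ioo z₀ z₁ ∩ landauLevels B d :=
      ⟨⟨hz.1.trans_le h2, h1.trans_lt hw.2⟩, ⟨m, n, rfl⟩⟩
    rw [hgap] at this
    exact this
  have hdg : ∀ n, StrictMonoOn (fun z => magTerm B d z n) (Set.Ioo z₀ z₁) := by
    intro n z hz w hw hzw
    have := dg_strict (hanti n hzw) (hno n z hz w hw)
    simp only [a] at this
    simp only [magTerm]
    linarith
  have hcont : ∀ n, ContinuousOn (f n) (Set.Ioo z₀ z₁) := by
    intro n z hz
    have h1 : ContinuousAt digamma (a n z) :=
      dg_cont (fun m hm => hno n z hz z hz m ⟨hm.le, hm.ge⟩)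
    have h2 : ContinuousAt (fun z => digamma (a n z)) z :=
      ContinuousAt.comp (f := a n) h1 (hacont n).continuousAt
    exact ((continuousAt_const.sub h2).mul continuousAt_const).continuousWithinAt
  have hmono : ∀ n, MonotoneOn (f n) (Set.Ioo z₀ z₁) := fun n z hz w hw hzw =>
    mul_le_mul_of_nonneg_right ((hdg n).monotoneOn hz hw hzw) (sq_nonneg _)
  obtain ⟨⟨n₀, m₀, hm₀⟩, hn₀⟩ := exists_ne_of_tsum_pos hs₀
  obtain ⟨⟨n₁, m₁, hm₁⟩, hn₁⟩ := exists_ne_of_tsum_pos hs₁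
  simp only at hn₀ hn₁
  have hp₀ := lt_of_le_of_ne (sq_nonneg _) hn₀.symm
  have hp₁ := lt_of_le_of_ne (sq_nonneg _) hn₁.symm
  obtain ⟨hS, hE⟩ := series_gap f hlt (magTerm_summable hB hd b) hcont hmono
    ⟨n₀, fun z hz w hw hzw => mul_lt_mul_of_pos_right (hdg n₀ hz hw hzw) hp₀⟩
    ⟨n₀, by
      have ha : Tendsto (a n₀) (𝓝[>] z₀) (𝓝[<] (-(m₀ : ℝ))) := by
        rw [← hlev n₀ m₀, hm₀]
        refine tendsto_nhdsWithin_iff.2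
          ⟨((hacont n₀).tendsto z₀).mono_left nhdsWithin_le_nhds, ?_⟩
        filter_upwards [self_mem_nhdsWithin] with y hy
        exact hanti n₀ hy
      exact ((tendsto_const_nhds.add_atBot (tendsto_neg_atTop_atBot.comp
        ((dg_pole m₀).2.comp ha))).atBot_mul_const hp₀).congr (fun y => rfl)⟩
    ⟨n₁, by
      have ha : Tendsto (a n₁) (𝓝[<] z₁) (𝓝[>] (-(m₁ : ℝ))) := by
        rw [← hlev n₁ m₁, hm₁]
        refine tendsto_nhdsWithin_iff.2
          ⟨((hacont n₁).tendsto z₁).mono_left nhdsWithin_le_nhds, ?_⟩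
        filter_upwards [self_mem_nhdsWithin] with y hy
        exact hanti n₁ hy
      exact ((tendsto_const_nhds.add_atTop (tendsto_neg_atBot_atTop.comp
        ((dg_pole m₁).1.comp ha))).atTop_mul_const hp₁).congr (fun y => rfl)⟩
  have hk : 0 < 1 / (2 * π * d) := by positivity
  have hX : StrictMonoOn (xiB B d b) (Set.Ioo z₀ z₁) := by
    intro z hz w hw hzw
    have := mul_lt_mul_of_pos_left (hS hz hw hzw) hk
    unfold xiB
    exact add_lt_add_left this _
  refine ⟨?_, ?_⟩
  · intro α
    obtain ⟨z, hz, hz'⟩ := hE ((α - (1 / (4 * π * d)) *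
      (Real.eulerMascheroniConstant + digamma (b / d) + (π / 2) * Real.cot (π * b / d)))
        / (1 / (2 * π * d)))
    have hzα : xiB B d b z = α := by
      unfold xiB
      simp only [f] at hz'
      rw [hz', mul_div_cancel₀ _ hk.ne']
      ring
    refine ⟨z, ⟨hz, hzα⟩, ?_⟩
    rintro w ⟨hw, hw'⟩
    exact hX.injOn hw hz (hw'.trans hzα.symm)
  · intro α α' z z' hz hz' h h' hαα
    rw [← h, ← h'] at hαα
    exact (hX.lt_iff_lt hz hz').1 hαα
end

section
/- Magnetic eigenvalue asymptotics at the gap endpoints: under the hypotheses of the preceding gap statement (consecutive levels z₀ < z₁ of Σ_B with s_i := Σ_{n ∈ J(z_i)} sin²(πnb/d) > 0 for i = 0,1), the unique solution ε(α) ∈ (z₀,z₁) of ξ_B(b,z) = α satisfies ε(α) = z₁ − (1/α)·(|B|/(πd))·s₁ + O(α^{−2}) as α → +∞, and ε(α) = z₀ − (1/α)·(|B|/(πd))·s₀ + O(α^{−2}) as α → −∞. -/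
open Real Filter Topology Asymptotics

lemma dg_rec (x : ℝ) (hx : ∀ m : ℕ, x ≠ -m) : digamma (x+1) = digamma x + 1/x := by
  have hx0 : x ≠ 0 := by simpa using hx 0
  have hd := (Real.differentiableAt_Gamma hx).hasDerivAt
  have hx1 : ∀ m : ℕ, x + 1 ≠ -m := by
    intro m h
    apply hx (m+1)
    push_cast
    linarith
  have hd1 := (Real.differentiableAt_Gamma hx1).hasDerivAt
  have h2 : HasDerivAt (fun y => Real.Gamma (y+1)) (deriv Real.Gamma (x+1)) x :=
    HasDerivAt.comp_add_const x 1 hd1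
  have h3 : HasDerivAt (fun y => y * Real.Gamma y) (1 * Real.Gamma x + x * deriv Real.Gamma x) x :=
    (hasDerivAt_id x).mul hd
  have h4 : (fun y => Real.Gamma (y+1)) =ᶠ[𝓝 x] (fun y => y * Real.Gamma y) := by
    filter_upwards [isOpen_ne.mem_nhds hx0] with y hy
    exact Real.Gamma_add_one hy
  have h5 := (h3.congr_of_eventuallyEq h4).unique h2
  have hG := Real.Gamma_ne_zero hx
  unfold digamma
  rw [← h5, Real.Gamma_add_one hx0]
  field_simp
  ring

lemma dg_sum (N : ℕ) (x : ℝ) (hx : ∀ m : ℕ, x ≠ -m) :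
    digamma x = digamma (x+N) - ∑ k ∈ Finset.range N, 1/(x+k) := by
  induction N with
  | zero => simp
  | succ N ih =>
    rw [Finset.sum_range_succ, ih]
    have h := dg_rec (x+N) (by
      intro m h
      apply hx (m+N)
      push_cast
      linarith)
    push_cast
    rw [← add_assoc, h]
    ring

lemma dg_pos (x : ℝ) (hx : 0 < x) : Real.log x - 1/x ≤ digamma x ∧ digamma x ≤ Real.log x := by
  have hne : ∀ y : ℝ, 0 < y → ∀ m : ℕ, y ≠ -m := by
    intro y hy m h
    have : (0:ℝ) ≤ m := m.cast_nonneg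
    linarith
  have hder : ∀ y : ℝ, 0 < y → HasDerivAt (Real.log ∘ Real.Gamma) (digamma y) y := by
    intro y hy
    exact ((Real.differentiableAt_Gamma (hne y hy)).hasDerivAt).log (Real.Gamma_pos_of_pos hy).ne'
  have hc := Real.convexOn_log_Gamma
  have hx1 : 0 < x + 1 := by linarith
  have hs : slope (Real.log ∘ Real.Gamma) x (x+1) = Real.log x := by
    rw [slope_def_field]
    simp only [Function.comp]
    rw [Real.Gamma_add_one hx.ne', Real.log_mul hx.ne' (Real.Gamma_pos_of_pos hx).ne']
    ring
  have h1 := hc.le_slope_of_hasDerivAt (x := x) (y := x+1) hx hx1 (by linarith) (hder x hx)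
  have h2 := hc.slope_le_of_hasDerivAt (x := x) (y := x+1) hx hx1 (by linarith) (hder _ hx1)
  rw [hs] at h1 h2
  rw [dg_rec x (hne x hx)] at h2
  constructor <;> linarith

/-- inverse quadratic series -/
lemma summ_inv (c a : ℝ) (hc : 0 < c) : Summable (fun n : ℕ => |1/(c*((n:ℝ)+1)^2 + a)|) := by
  have h0 : Summable (fun n : ℕ => (2/c) * (1 / ((n:ℝ)+1)^2)) := by
    apply Summable.mul_left
    have := (summable_nat_add_iff 1).2 (Real.summable_one_div_nat_pow.2 (one_lt_two))
    simpa using this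
  apply Summable.of_norm_bounded_eventually_nat h0
  have ht : Tendsto (fun n : ℕ => c/2*((n:ℝ))) atTop atTop :=
    tendsto_natCast_atTop_atTop.const_mul_atTop (by positivity)
  filter_upwards [ht.eventually_ge_atTop (|a|)] with n hn
  have h1 : -|a| ≤ a := neg_abs_le a
  have hn0 : (0:ℝ) ≤ n := n.cast_nonneg
  have h2 : c/2*((n:ℝ)+1)^2 ≤ c*((n:ℝ)+1)^2 + a := by nlinarith [mul_nonneg hc.le (sq_nonneg (n:ℝ)), mul_nonneg hc.le hn0]
  have h3 : 0 < c/2*((n:ℝ)+1)^2 := by positivity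
  rw [Real.norm_eq_abs, abs_abs, abs_of_pos (one_div_pos.2 (h3.trans_le h2))]
  calc _ ≤ 1 / (c/2*((n:ℝ)+1)^2) := one_div_le_one_div_of_le h3 h2
    _ = _ := by field_simp

/-- final elementary estimate -/
lemma final_est (c₁ c₀ M L : ℝ) (hc₁ : 0 < c₁) (hc₀ : 0 < c₀) (hM : 0 ≤ M) (hL : 0 < L) :
    ∃ C A : ℝ, ∀ α δ : ℝ, A ≤ α → 0 < δ → δ < L →
      |α - c₁/δ + c₀/(L-δ)| ≤ M → |δ - c₁/α| ≤ C/α^2 := by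
  refine ⟨2*c₁*(M + 2*c₀/L), 2*M + 4*c₁/L + 1, ?_⟩
  intro α δ hA hδ hδL h
  have hp : 0 < 4*c₁/L := by positivity
  have hα : 0 < α := by linarith
  have hLδ : 0 < L - δ := by linarith
  have h' := abs_le.1 h
  have hq : 0 < c₀/(L-δ) := by positivity
  have h1 : α/2 ≤ c₁/δ := by linarith
  have h2 : δ * α ≤ 2*c₁ := by
    rw [le_div_iff₀ hδ] at h1
    linarith
  have h3 : δ ≤ L/2 := by
    have : 4*c₁/L ≤ α := by linarith
    rw [div_le_iff₀ hL] at this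
    by_contra hcon
    push Not at hcon
    nlinarith
  have h4 : c₀/(L-δ) ≤ 2*c₀/L := by
    rw [div_le_div_iff₀ hLδ hL]
    nlinarith
  have h5 : |α - c₁/δ| ≤ M + 2*c₀/L := by
    rw [abs_le]
    constructor <;> linarith
  have h6 : δ - c₁/α = (α - c₁/δ) * (δ*α) / α^2 := by
    field_simp
  rw [h6, abs_div, abs_mul, abs_of_pos (by positivity : 0 < δ*α), abs_of_pos (by positivity : 0 < α^2)]
  have hp2 : 0 ≤ δ*α := by positivity
  have hp3 : 0 ≤ M + 2*c₀/L := by positivity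
  apply div_le_div_of_nonneg_right _ (by positivity)
  calc |α - c₁/δ| * (δ*α) ≤ (M + 2*c₀/L) * (2*c₁) := by gcongr
    _ = _ := by ring

lemma pole_bd (l z z₀ z₁ : ℝ) (hz : z ∈ Set.Ioo z₀ z₁) (hl : l ∉ Set.Ioo z₀ z₁) :
    |1/(l-z) - ((if l = z₁ then (1:ℝ) else 0)/(z₁-z) - (if l = z₀ then (1:ℝ) else 0)/(z-z₀))|
      ≤ |1/(l-z₁)| + |1/(l-z₀)| := by
  obtain ⟨h0, h1⟩ := hz
  have hlt : z₀ < z₁ := h0.trans h1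
  by_cases e1 : l = z₁
  · subst e1
    simp only [if_true, if_neg hlt.ne', zero_div, sub_zero, sub_self, abs_zero]
    positivity
  by_cases e0 : l = z₀
  · subst e0
    have : 1/(l-z) = -(1/(z-l)) := by rw [← neg_sub z l, div_neg]
    simp only [if_true, if_neg hlt.ne, zero_div, zero_sub, this, sub_self, abs_zero]
    positivity
  simp only [if_neg e1, if_neg e0, zero_div, sub_zero]
  rcases lt_or_ge l z₀ with h | h
  · have : |1/(l-z)| ≤ |1/(l-z₀)| := by
      rw [abs_div, abs_div, abs_one, abs_of_neg (by linarith : l - z < 0), abs_of_neg (by linarith : l - z₀ < 0)]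
      apply one_div_le_one_div_of_le <;> linarith
    linarith [abs_nonneg (1/(l-z₁))]
  · have h2 : z₁ < l := by
      by_contra hc
      push Not at hc
      exact hl ⟨lt_of_le_of_ne h (Ne.symm e0), lt_of_le_of_ne hc e1⟩
    have : |1/(l-z)| ≤ |1/(l-z₁)| := by
      rw [abs_div, abs_div, abs_one, abs_of_pos (by linarith : 0 < l - z), abs_of_pos (by linarith : 0 < l - z₁)]
      apply one_div_le_one_div_of_le <;> linarith
    linarith [abs_nonneg (1/(l-z₀))]

open Classical in
lemma ind_count (β e w : ℝ) (hβ : 0 < β) (he : 0 ≤ e) (N : ℕ) (hN : w ≤ 2*β*N) :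
    ∑ k ∈ Finset.range N, (if β*(2*(k:ℝ)+1)+e = w then (1:ℝ) else 0)
      = if ∃ m : ℕ, β*(2*(m:ℝ)+1)+e = w then 1 else 0 := by
  by_cases h : ∃ m : ℕ, β*(2*(m:ℝ)+1)+e = w
  · rw [if_pos h]
    obtain ⟨m, hm⟩ := h
    have hmN : m < N := by
      have : β * (m:ℝ) < β * N := by nlinarith
      exact_mod_cast lt_of_mul_lt_mul_left this hβ.le
    rw [Finset.sum_eq_single m]
    · rw [if_pos hm]
    · intro k _ hk
      rw [if_neg]
      intro h
      apply hk
      have : β * (k:ℝ) = β * m := by linarith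
      exact_mod_cast mul_left_cancel₀ hβ.ne' this
    · intro h
      exact absurd (Finset.mem_range.2 hmN) h
  · rw [if_neg h]
    apply Finset.sum_eq_zero
    intro k _
    rw [if_neg]
    intro hk
    exact h ⟨k, hk⟩

lemma log_part (L h H : ℝ) (hL : 0 < L) (h0 : 0 ≤ h) (hH : h ≤ H) :
    |Real.log L - digamma (L+h)| ≤ (H+1) * |1/L| := by
  have hy : 0 < L + h := by linarith
  obtain ⟨h1, h2⟩ := dg_pos (L+h) hy
  have h3 : 1/(L+h) ≤ 1/L := one_div_le_one_div_of_le hL (by linarith)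
  have h4 : Real.log L ≤ Real.log (L+h) := Real.log_le_log hL (by linarith)
  have h5 : Real.log (L+h) - Real.log L ≤ h * (1/L) := by
    rw [← Real.log_div hy.ne' hL.ne']
    have := Real.log_le_sub_one_of_pos (div_pos hy hL)
    have e : (L+h)/L - 1 = h * (1/L) := by
      field_simp
      ring
    linarith
  have hLi : 0 < 1/L := by positivity
  have h6 : h * (1/L) ≤ H * (1/L) := by gcongr
  rw [abs_of_pos hLi, abs_le]
  have h7 : 0 ≤ H * (1/L) := by
    have : 0 ≤ H := h0.trans hH
    positivity
  constructor <;> nlinarith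

open Classical in
lemma term_bd (B d z₀ z₁ : ℝ) (hB : B ≠ 0) (hd : 0 < d)
    (hgap : Set.Ioo z₀ z₁ ∩ landauLevels B d = ∅) :
    ∃ g : ℕ → ℝ, Summable g ∧ ∀ z ∈ Set.Ioo z₀ z₁, ∀ n : ℕ,
      |magTerm B d z n - 2*|B| *
        ((if ∃ m : ℕ, |B| * (2 * (m : ℝ) + 1) + (π * ((n : ℝ) + 1) / d) ^ 2 = z₁ then (1:ℝ) else 0)/(z₁-z)
        - (if ∃ m : ℕ, |B| * (2 * (m : ℝ) + 1) + (π * ((n : ℝ) + 1) / d) ^ 2 = z₀ then (1:ℝ) else 0)/(z-z₀))|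
      ≤ g n := by
  set β := |B| with hβdef
  have hβ : 0 < β := abs_pos.2 hB
  obtain ⟨N, hN⟩ := exists_nat_ge (z₁/(2*β))
  rw [div_le_iff₀ (by positivity)] at hN
  set H : ℝ := (β - z₀)/(2*β) + N with hH
  set c : ℝ := (π/d)^2 with hc
  have hc0 : 0 < c := by positivity
  refine ⟨fun n => (H+1) * |1/((c/(2*β))*((n:ℝ)+1)^2 + 0)| + ∑ k ∈ Finset.range N,
    2*β*(|1/(c*((n:ℝ)+1)^2 + (β*(2*(k:ℝ)+1) - z₁))| + |1/(c*((n:ℝ)+1)^2 + (β*(2*(k:ℝ)+1) - z₀))|), ?_, ?_⟩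
  · apply Summable.add
    · exact (summ_inv _ _ (by positivity)).mul_left _
    · apply summable_sum
      intro k _
      exact ((summ_inv _ _ hc0).add (summ_inv _ _ hc0)).mul_left _
  intro z hz n
  have hE : (π * ((n : ℝ) + 1) / d) ^ 2 = c * ((n:ℝ)+1)^2 := by
    rw [hc]
    ring
  set E := c * ((n:ℝ)+1)^2 with hEdef
  have hE0 : 0 < E := by positivity
  rw [hE, ← ind_count β E z₁ hβ hE0.le N (by linarith),
    ← ind_count β E z₀ hβ hE0.le N (by linarith [hz.1, hz.2])]
  have hlam : ∀ k : ℕ, β * (2*(k:ℝ)+1) + E ∉ Set.Ioo z₀ z₁ := by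
    intro k hk
    have : β * (2*(k:ℝ)+1) + E ∈ Set.Ioo z₀ z₁ ∩ landauLevels B d :=
      ⟨hk, k, n, by rw [hE]⟩
    rw [hgap] at this
    exact this
  have hx : ∀ m : ℕ, (β - z + E)/(2*β) ≠ -m := by
    intro m hm
    apply hlam m
    rw [div_eq_iff (by positivity)] at hm
    have : β * (2*(m:ℝ)+1) + E = z := by linarith
    rw [this]
    exact hz
  have hm : magTerm B d z n = (Real.log (E/(2*β)) - digamma (E/(2*β) + ((β - z)/(2*β) + N)))
      + ∑ k ∈ Finset.range N, 2*β*(1/(β*(2*(k:ℝ)+1)+E - z)) := by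
    unfold magTerm
    rw [← hβdef, hE, dg_sum N _ hx]
    have e1 : (π * ((n : ℝ) + 1)) ^ 2 / (2 * β * d ^ 2) = E/(2*β) := by
      rw [hEdef, hc]
      field_simp
    have e2 : (β - z + E)/(2*β) + N = E/(2*β) + ((β - z)/(2*β) + N) := by ring
    have e3 : ∀ k ∈ Finset.range N, 1/((β - z + E)/(2*β)+(k:ℝ)) = 2*β*(1/(β*(2*(k:ℝ)+1)+E - z)) := by
      intro k _
      have : (β - z + E)/(2*β)+(k:ℝ) = (β*(2*(k:ℝ)+1)+E - z)/(2*β) := by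
        field_simp
        ring
      rw [this, one_div_div]
      ring
    rw [e1, e2, Finset.sum_congr rfl e3]
    ring
  have hL := log_part (E/(2*β)) ((β - z)/(2*β) + N) H (by positivity) (by
      have : (β - z)/(2*β) + N = (β + (2*β*N - z))/(2*β) := by
        field_simp
        ring
      rw [this]
      apply div_nonneg _ (by positivity)
      linarith [hz.2]) (by
      rw [hH]
      have := hz.1
      gcongr)
  have hS : |∑ k ∈ Finset.range N, 2*β*(1/(β*(2*(k:ℝ)+1)+E - z))
      - 2*β*((∑ k ∈ Finset.range N, (if β*(2*(k:ℝ)+1)+E = z₁ then (1:ℝ) else 0))/(z₁-z)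
        - (∑ k ∈ Finset.range N, (if β*(2*(k:ℝ)+1)+E = z₀ then (1:ℝ) else 0))/(z-z₀))|
      ≤ ∑ k ∈ Finset.range N,
    2*β*(|1/(E + (β*(2*(k:ℝ)+1) - z₁))| + |1/(E + (β*(2*(k:ℝ)+1) - z₀))|) := by
    rw [Finset.sum_div, Finset.sum_div, ← Finset.sum_sub_distrib, Finset.mul_sum, ← Finset.sum_sub_distrib]
    refine (Finset.abs_sum_le_sum_abs _ _).trans (Finset.sum_le_sum ?_)
    intro k _
    rw [← mul_sub, abs_mul, abs_of_pos (by positivity : 0 < 2*β)]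
    apply mul_le_mul_of_nonneg_left _ (by positivity)
    have := pole_bd _ z z₀ z₁ hz (hlam k)
    have e1 : E + (β*(2*(k:ℝ)+1) - z₁) = β*(2*(k:ℝ)+1) + E - z₁ := by ring
    have e0 : E + (β*(2*(k:ℝ)+1) - z₀) = β*(2*(k:ℝ)+1) + E - z₀ := by ring
    rw [e1, e0]
    exact this
  rw [hm, add_sub_assoc]
  refine (abs_add_le _ _).trans (add_le_add ?_ hS)
  have : c/(2*β)*((n:ℝ)+1)^2 + 0 = E/(2*β) := by
    rw [hEdef]
    ring
  rw [this]
  exact hL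

open Classical in
lemma sub_sum (P : ℕ → Prop) (f : ℕ → ℝ) (s : ℝ) (hs : s = ∑' n : {n : ℕ // P n}, f n) (h : 0 < s) :
    HasSum (fun n => (if P n then (1:ℝ) else 0) * f n) s := by
  have h1 : Summable (fun n : {n : ℕ // P n} => f n) := by
    by_contra hc
    rw [tsum_eq_zero_of_not_summable hc] at hs
    linarith
  have h2 : HasSum (fun n : {n : ℕ // P n} => f n) s := hs ▸ h1.hasSum
  have h3 := (hasSum_subtype_iff_indicator (f := f) (s := {n | P n}) (a := s)).1 h2
  convert h3 using 2 with n
  by_cases hn : P n <;> simp [Set.indicator, hn]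

lemma xi_bd (B d b z₀ z₁ : ℝ) (hB : B ≠ 0) (hd : 0 < d)
    (hgap : Set.Ioo z₀ z₁ ∩ landauLevels B d = ∅)
    (s₀ s₁ : ℝ)
    (hs₀def : s₀ = ∑' n : {n : ℕ // ∃ m : ℕ,
        |B| * (2 * (m : ℝ) + 1) + (π * (((n : ℕ) : ℝ) + 1) / d) ^ 2 = z₀},
      Real.sin (π * (((n : ℕ) : ℝ) + 1) * b / d) ^ 2)
    (hs₁def : s₁ = ∑' n : {n : ℕ // ∃ m : ℕ,
        |B| * (2 * (m : ℝ) + 1) + (π * (((n : ℕ) : ℝ) + 1) / d) ^ 2 = z₁},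
      Real.sin (π * (((n : ℕ) : ℝ) + 1) * b / d) ^ 2)
    (hs₀ : 0 < s₀) (hs₁ : 0 < s₁) :
    ∃ M : ℝ, 0 ≤ M ∧ ∀ z ∈ Set.Ioo z₀ z₁,
      |xiB B d b z - (|B| / (π * d) * s₁)/(z₁ - z) + (|B| / (π * d) * s₀)/(z - z₀)| ≤ M := by
  classical
  obtain ⟨g, hg, hbd⟩ := term_bd B d z₀ z₁ hB hd hgap
  have H1 := sub_sum _ (fun n : ℕ => Real.sin (π * ((n : ℝ) + 1) * b / d) ^ 2) s₁ hs₁def hs₁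
  have H0 := sub_sum _ (fun n : ℕ => Real.sin (π * ((n : ℝ) + 1) * b / d) ^ 2) s₀ hs₀def hs₀
  set K := (1 / (4 * π * d)) *
      (Real.eulerMascheroniConstant + digamma (b / d) + (π / 2) * Real.cot (π * b / d)) with hK
  refine ⟨|1/(2*π*d)| * |∑' n, g n| + |K|, by positivity, ?_⟩
  intro z hz
  have HP := ((H1.div_const (z₁-z)).sub (H0.div_const (z-z₀))).mul_left (2*|B|)
  set p : ℕ → ℝ := _ with hp
  change HasSum p _ at HP
  have hr : ∀ n, ‖magTerm B d z n * Real.sin (π * ((n : ℝ) + 1) * b / d) ^ 2 - p n‖ ≤ g n := by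
    intro n
    have h1 := hbd z hz n
    have key : ∀ t u s : ℝ, |t - u| ≤ g n → 0 ≤ s → s ≤ 1 → |t*s - u*s| ≤ g n := by
      intro t u s h hs0 hs1
      rw [← sub_mul, abs_mul, abs_of_nonneg hs0]
      nlinarith [abs_nonneg (t-u)]
    have h2 := key _ _ _ h1 (sq_nonneg (Real.sin (π * ((n : ℝ) + 1) * b / d))) (Real.sin_sq_le_one _)
    rw [Real.norm_eq_abs]
    convert h2 using 2
    simp only [hp]
    ring
  have hrs : Summable (fun n => magTerm B d z n * Real.sin (π * ((n : ℝ) + 1) * b / d) ^ 2 - p n) :=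
    Summable.of_norm_bounded hg hr
  have hrb := tsum_of_norm_bounded hg.hasSum hr
  have hsum := (hrs.hasSum.add HP).tsum_eq
  simp only [sub_add_cancel] at hsum
  set R := ∑' n, (magTerm B d z n * Real.sin (π * ((n : ℝ) + 1) * b / d) ^ 2 - p n)
  have e : xiB B d b z - (|B| / (π * d) * s₁)/(z₁ - z) + (|B| / (π * d) * s₀)/(z - z₀)
      = 1/(2*π*d) * R + K := by
    unfold xiB
    rw [← hK, hsum]
    have h1 : z₁ - z ≠ 0 := by linarith [hz.2]
    have h0 : z - z₀ ≠ 0 := by linarith [hz.1]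
    field_simp
    ring
  rw [e]
  refine (abs_add_le _ _).trans ?_
  rw [abs_mul]
  have hR : |R| ≤ |∑' n, g n| := hrb.trans (le_abs_self _)
  exact add_le_add (mul_le_mul_of_nonneg_left hR (abs_nonneg _)) le_rfl

/-- Magnetic eigenvalue asymptotics at the gap endpoints: if `z₀ < z₁` are
consecutive Landau–transverse levels with positive coupling sums `s₀, s₁`, and
`ε(α)` is the unique solution of `ξ_B(b,z) = α` in the gap `(z₀,z₁)`, then
`ε(α) = z₁ − (1/α)·(|B|/(πd))·s₁ + O(α^{−2})` as `α → +∞` and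
`ε(α) = z₀ − (1/α)·(|B|/(πd))·s₀ + O(α^{−2})` as `α → −∞`. -/
theorem xiB_gap_eigenvalue_asymptotics (B d b z₀ z₁ : ℝ) (hB : B ≠ 0) (hd : 0 < d)
    (hb0 : 0 < b) (hbd : b < d)
    (hz₀ : z₀ ∈ landauLevels B d) (hz₁ : z₁ ∈ landauLevels B d) (hlt : z₀ < z₁)
    (hgap : Set.Ioo z₀ z₁ ∩ landauLevels B d = ∅)
    (s₀ s₁ : ℝ)
    (hs₀def : s₀ = ∑' n : {n : ℕ // ∃ m : ℕ,
        |B| * (2 * (m : ℝ) + 1) + (π * (((n : ℕ) : ℝ) + 1) / d) ^ 2 = z₀},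
      Real.sin (π * (((n : ℕ) : ℝ) + 1) * b / d) ^ 2)
    (hs₁def : s₁ = ∑' n : {n : ℕ // ∃ m : ℕ,
        |B| * (2 * (m : ℝ) + 1) + (π * (((n : ℕ) : ℝ) + 1) / d) ^ 2 = z₁},
      Real.sin (π * (((n : ℕ) : ℝ) + 1) * b / d) ^ 2)
    (hs₀ : 0 < s₀) (hs₁ : 0 < s₁)
    (ε : ℝ → ℝ) (hε : ∀ α : ℝ, ε α ∈ Set.Ioo z₀ z₁ ∧ xiB B d b (ε α) = α) :
    (∃ C αplus : ℝ, ∀ α : ℝ, αplus ≤ α →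
        |ε α - (z₁ - (1 / α) * (|B| / (π * d)) * s₁)| ≤ C / α ^ 2) ∧
    (∃ C αminus : ℝ, ∀ α : ℝ, α ≤ αminus →
        |ε α - (z₀ - (1 / α) * (|B| / (π * d)) * s₀)| ≤ C / α ^ 2) := by
  obtain ⟨M, hM, hbd⟩ := xi_bd B d b z₀ z₁ hB hd hgap s₀ s₁ hs₀def hs₁def hs₀ hs₁
  have hBp : 0 < |B| := abs_pos.2 hB
  set c₁ := |B| / (π * d) * s₁ with hc₁
  set c₀ := |B| / (π * d) * s₀ with hc₀
  have hc₁p : 0 < c₁ := by positivity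
  have hc₀p : 0 < c₀ := by positivity
  have hL : 0 < z₁ - z₀ := by linarith
  constructor
  · obtain ⟨C, A, h⟩ := final_est c₁ c₀ M (z₁ - z₀) hc₁p hc₀p hM hL
    refine ⟨C, A, fun α hα => ?_⟩
    obtain ⟨hz, hx⟩ := hε α
    have h1 := hbd _ hz
    rw [hx] at h1
    have h2 := h α (z₁ - ε α) hα (by linarith [hz.2]) (by linarith [hz.1])
      (by convert h1 using 3; ring)
    rw [abs_sub_comm] at h2
    convert h2 using 2
    rw [hc₁]
    ring
  · obtain ⟨C, A, h⟩ := final_est c₀ c₁ M (z₁ - z₀) hc₀p hc₁p hM hL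
    refine ⟨C, -A, fun α hα => ?_⟩
    obtain ⟨hz, hx⟩ := hε α
    have h1 := hbd _ hz
    rw [hx] at h1
    have h2 := h (-α) (ε α - z₀) (by linarith) (by linarith [hz.1]) (by linarith [hz.2])
      (by
        rw [← abs_neg] at h1
        convert h1 using 2
        have : z₁ - z₀ - (ε α - z₀) = z₁ - ε α := by ring
        rw [this]
        ring)
    rw [neg_sq] at h2
    convert h2 using 2
    rw [hc₀, div_neg]
    ring
end
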